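/- Let X be a random variable with values in a set 𝒳 with distribution μ, let ℱ be a finite class of hypotheses f : 𝒳 → [0,1], and let δ > 0, n ≥ 2. Then with probability at least 1 − δ in the i.i.d. sample X = (X_1, ..., X_n) ∼ μ^n one has, simultaneously for all f ∈ ℱ: P(f, μ) − P_n(f, X) ≤ sqrt(2 V_n(f, X) ln(2|ℱ|/δ) / n) + 7 ln(2|ℱ|/δ) / (3(n−1)), where |ℱ| is the cardinality of ℱ. -/

import Mathlib

/-!
For a single `f` with mean `p` and variance `V`, put `L = log (2|F|/δ)`. Two events, each of
probability at least `1 - exp (-L)`, combine to the bound.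

* Bernstein's inequality in its sub-gamma form (`bernstein_tail`):
  `p - Pₙ ≤ √(2VL/n) + L/(3(n-1))`. It rests on `exp u ≤ 1 + u + u²/(2(1 - c/3))` for
  `u ≤ c < 3` and Chernoff's method.
* A lower tail bound for the sample variance (`variance_tail`): `√V ≤ √Vₙ + √(2L/(n-1))`.
  Following Hoeffding, the U-statistic `Vₙ` is the average over all permutations `σ` of
  `(1/m) ∑_{k<m} (x_{σ(2k)} - x_{σ(2k+1)})²/2` with `m = ⌊n/2⌋`. By Jensen's inequality the moment
  generating function of `V - Vₙ` is at most that of one such average, which is a mean of `m`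
  independent variables `V - Q` with `0 ≤ Q ≤ 1/2` and `E Q = V`. Since `E Q² ≤ V/2`, the mgf of
  `V - Q` at `t ≥ 0` is at most `exp (V t²/4)`, and `2m ≥ n - 1` gives the sub-Gaussian tail
  `exp (-(n-1)s²/(2V))`.

Substituting the second estimate into the first costs `√(2L/n) √(2L/(n-1)) ≤ 2L/(n-1)`, and
`2 + 1/3 = 7/3`. A union bound over the two events and over `F` finishes the proof.
-/

open MeasureTheory

/-- Sample mean `P_n(x) = (1/n) ∑ᵢ xᵢ`. -/
noncomputable def sampleMean (n : ℕ) (x : Fin n → ℝ) : ℝ := (∑ i, x i) / n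

/-- Sample variance `V_n(x) = (1/(n(n-1))) ∑_{i<j} (xᵢ - xⱼ)² = (1/(2n(n-1))) ∑_{i,j} (xᵢ - xⱼ)²`. -/
noncomputable def sampleVar (n : ℕ) (x : Fin n → ℝ) : ℝ :=
  (∑ i, ∑ j, (x i - x j) ^ 2) / (2 * (n : ℝ) * ((n : ℝ) - 1))

open ProbabilityTheory

/-! ### Scalar exponential inequalities -/

lemma exp_neg_le_quadratic {t : ℝ} (ht : 0 ≤ t) : Real.exp (-t) ≤ 1 - t + t ^ 2 / 2 := by
  have h := Real.quadratic_le_exp_of_nonneg ht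
  have hpos : 0 < 1 + t + t ^ 2 / 2 := by positivity
  rw [Real.exp_neg, inv_le_iff_one_le_mul₀ (Real.exp_pos t)]
  have h2 : 0 ≤ 1 - t + t ^ 2 / 2 := by nlinarith [sq_nonneg (t - 1)]
  nlinarith [mul_le_mul_of_nonneg_left h h2, sq_nonneg (t ^ 2)]

/-- The function `x ↦ (3 + 2x + x²/2) exp (-x) + x` is nondecreasing on `[0, ∞)`, and equals `3`
at `0`. -/
lemma exp_mul_three_sub_le {u : ℝ} (hu : 0 ≤ u) :
    (3 - u) * Real.exp u ≤ 3 + 2 * u + u ^ 2 / 2 := by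
  let g : ℝ → ℝ := fun x => (3 + 2 * x + x ^ 2 / 2) * Real.exp (-x) + x
  have hd : ∀ x, HasDerivAt g (1 - (1 + x + x ^ 2 / 2) * Real.exp (-x)) x := by
    intro x
    have h1 : HasDerivAt (fun x : ℝ => 3 + 2 * x + x ^ 2 / 2) (2 + x) x := by
      have := (((hasDerivAt_id x).const_mul 2).const_add 3).add ((hasDerivAt_pow 2 x).div_const 2)
      refine this.congr_deriv ?_
      simp
    have h2 : HasDerivAt (fun x : ℝ => Real.exp (-x)) (Real.exp (-x) * -1) x :=
      (hasDerivAt_neg x).exp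
    refine ((h1.mul h2).add (hasDerivAt_id x)).congr_deriv ?_
    ring
  have hmono : MonotoneOn g (Set.Ici 0) := by
    refine monotoneOn_of_deriv_nonneg (convex_Ici 0)
      (fun x _ => (hd x).continuousAt.continuousWithinAt)
      (fun x _ => (hd x).differentiableAt.differentiableWithinAt) ?_
    intro x hx
    rw [interior_Ici, Set.mem_Ioi] at hx
    rw [(hd x).deriv, Real.exp_neg, ← div_eq_mul_inv, sub_nonneg, div_le_one (Real.exp_pos x)]
    exact Real.quadratic_le_exp_of_nonneg hx.le
  have h := hmono (Set.mem_Ici.2 le_rfl) (Set.mem_Ici.2 hu) hu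
  simp only [g, Real.exp_neg] at h
  have he := Real.exp_pos u
  norm_num at h
  have h' : 3 - u ≤ (3 + 2 * u + u ^ 2 / 2) * (Real.exp u)⁻¹ := by linarith
  rwa [← div_eq_mul_inv, le_div_iff₀ he] at h'

/-- The pointwise bound behind Bernstein's inequality; only an upper bound on `u` is needed, since
for `u ≤ 0` the quadratic Taylor polynomial already dominates. -/
lemma exp_le_bernstein {u c : ℝ} (hc : 0 ≤ c) (hc3 : c < 3) (hu : u ≤ c) :
    Real.exp u ≤ 1 + u + u ^ 2 / (2 * (1 - c / 3)) := by
  have hc' : 0 < 1 - c / 3 := by linarith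
  rcases le_total 0 u with h | h
  · have h1 := exp_mul_three_sub_le h
    have hu3 : 0 < 3 - u := by linarith
    have h2 : Real.exp u ≤ (3 + 2 * u + u ^ 2 / 2) / (3 - u) := by
      rw [le_div_iff₀ hu3]; linarith
    have h3 : (3 + 2 * u + u ^ 2 / 2) / (3 - u) = 1 + u + u ^ 2 / (2 * (1 - u / 3)) := by
      have : 1 - u / 3 ≠ 0 := by linarith
      have : 3 - u ≠ 0 := hu3.ne'
      field_simp
      ring
    rw [h3] at h2
    have h4 : u ^ 2 / (2 * (1 - u / 3)) ≤ u ^ 2 / (2 * (1 - c / 3)) := by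
      gcongr
    linarith
  · have h1 := exp_neg_le_quadratic (t := -u) (by linarith)
    rw [neg_neg] at h1
    have h4 : u ^ 2 / 2 ≤ u ^ 2 / (2 * (1 - c / 3)) := by
      apply div_le_div_of_nonneg_left (sq_nonneg u) (by positivity)
      linarith
    nlinarith

/-! ### Moment generating functions and independence -/

section
variable {Ω : Type*} [MeasurableSpace Ω] {ν : Measure Ω} [IsProbabilityMeasure ν]

lemma integrable_of_abs_le {Y : Ω → ℝ} (hm : Measurable Y) {C : ℝ} (h : ∀ ω, |Y ω| ≤ C) :
    Integrable Y ν :=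
  Integrable.of_bound hm.aestronglyMeasurable C (Filter.Eventually.of_forall h)

lemma integrable_exp_mul_of_abs_le {Y : Ω → ℝ} (hm : Measurable Y) {C : ℝ}
    (h : ∀ ω, |Y ω| ≤ C) (t : ℝ) : Integrable (fun ω => Real.exp (t * Y ω)) ν := by
  refine integrable_of_abs_le (by fun_prop) (C := Real.exp (|t| * C)) fun ω => ?_
  rw [Real.abs_exp]
  apply Real.exp_le_exp.2
  calc t * Y ω ≤ |t * Y ω| := le_abs_self _
    _ = |t| * |Y ω| := abs_mul _ _
    _ ≤ |t| * C := by gcongr; exact h ω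

lemma mgf_le_bernstein {Y : Ω → ℝ} (hm : Measurable Y) (hY : ∀ ω, |Y ω| ≤ 1) {V : ℝ}
    (h0 : ∫ ω, Y ω ∂ν = 0) (h2 : ∫ ω, Y ω ^ 2 ∂ν = V) {t : ℝ} (ht : 0 ≤ t) (ht3 : t < 3) :
    mgf Y ν t ≤ Real.exp (V * (t ^ 2 / (2 * (1 - t / 3)))) := by
  have i1 : Integrable Y ν := integrable_of_abs_le hm hY
  have i2 : Integrable (fun ω => Y ω ^ 2) ν :=
    integrable_of_abs_le (by fun_prop) (C := 1) fun ω => by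
      rw [abs_pow]; exact pow_le_one₀ (abs_nonneg _) (hY ω)
  set K := t ^ 2 / (2 * (1 - t / 3)) with hK
  have i3 : Integrable (fun ω => 1 + t * Y ω) ν := (integrable_const 1).add (i1.const_mul t)
  calc mgf Y ν t ≤ ∫ ω, ((1 + t * Y ω) + K * Y ω ^ 2) ∂ν := by
        refine integral_mono (integrable_exp_mul_of_abs_le hm hY t)
          (i3.add (i2.const_mul K)) fun ω => ?_
        have := exp_le_bernstein ht ht3 (u := t * Y ω)
          (by nlinarith [(abs_le.1 (hY ω)).2])
        calc Real.exp (t * Y ω) ≤ _ := this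
          _ = (1 + t * Y ω) + K * Y ω ^ 2 := by rw [hK]; ring
    _ = 1 + V * K := by
        rw [integral_add i3 (i2.const_mul K), integral_add (integrable_const 1) (i1.const_mul t),
          integral_const_mul, integral_const_mul, h0, h2]
        simp; ring
    _ ≤ _ := by have := Real.add_one_le_exp (V * K); linarith

/-- Sub-Gaussian lower tail of a variable in `[0, 1/2]` with mean `V`, with variance proxy `V/2`:
this uses `E Q² ≤ V/2`. -/
lemma mgf_const_sub_le {Q : Ω → ℝ} (hm : Measurable Q) (hQ0 : ∀ ω, 0 ≤ Q ω)
    (hQ : ∀ ω, Q ω ≤ 1 / 2) {V : ℝ} (hV : ∫ ω, Q ω ∂ν = V) {t : ℝ} (ht : 0 ≤ t) :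
    mgf (fun ω => V - Q ω) ν t ≤ Real.exp (V * (t ^ 2 / 4)) := by
  have hb : ∀ ω, |Q ω| ≤ 1 / 2 := fun ω => abs_le.2 ⟨by linarith [hQ0 ω], hQ ω⟩
  have i1 : Integrable Q ν := integrable_of_abs_le hm hb
  have i2 := integrable_exp_mul_of_abs_le (ν := ν) hm hb (-t)
  have key : ∫ ω, Real.exp (-t * Q ω) ∂ν ≤ Real.exp (- t * V + V * (t ^ 2 / 4)) := by
    calc _ ≤ ∫ ω, (1 + (-t + t ^ 2 / 4) * Q ω) ∂ν := by
          refine integral_mono i2 ((integrable_const 1).add (i1.const_mul _)) fun ω => ?_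
          have := exp_neg_le_quadratic (t := t * Q ω) (mul_nonneg ht (hQ0 ω))
          simp only [neg_mul]
          nlinarith [mul_nonneg (sq_nonneg t) (mul_nonneg (hQ0 ω) (sub_nonneg.2 (hQ ω)))]
      _ = 1 + (-t + t ^ 2 / 4) * V := by
          rw [integral_add (integrable_const 1) (i1.const_mul _), integral_const_mul, hV]
          simp
      _ ≤ _ := by have := Real.add_one_le_exp (- t * V + V * (t ^ 2 / 4)); linarith
  have : mgf (fun ω => V - Q ω) ν t = Real.exp (t * V) * ∫ ω, Real.exp (-t * Q ω) ∂ν := by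
    rw [mgf, ← integral_const_mul]
    congr 1; ext ω
    rw [← Real.exp_add]; ring_nf
  rw [this]
  calc _ ≤ Real.exp (t * V) * Real.exp (- t * V + V * (t ^ 2 / 4)) := by gcongr
    _ = _ := by rw [← Real.exp_add]; ring_nf

/-- If a doubly indexed family is independent, then its rows are independent random vectors.
Converse direction to `iIndepFun_uncurry`. -/
lemma iIndepFun_curry {ι κ : Type*} {X : ι → κ → Ω → ℝ} (mX : ∀ i j, Measurable (X i j))
    (h : iIndepFun (fun (p : (_ : ι) × κ) ω => X p.1 p.2 ω) ν) :
    iIndepFun (fun i ω j => X i j ω) ν := by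
  have (i : ι) (j : κ) : IsProbabilityMeasure (ν.map (X i j)) :=
    Measure.isProbabilityMeasure_map (mX i j).aemeasurable
  have (i : ι) : IsProbabilityMeasure (ν.map (fun ω => (X i · ω))) :=
    Measure.isProbabilityMeasure_map (Measurable.aemeasurable (by fun_prop))
  have hrow (i : ι) : iIndepFun (X i) ν :=
    h.precomp (g := fun j => (⟨i, j⟩ : (_ : ι) × κ)) (fun a b hab => by simpa using hab)
  have hc : (MeasurableEquiv.piCurry (fun (_ : ι) (_ : κ) => ℝ)) ∘ (fun ω p ↦ X p.1 p.2 ω)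
      = fun ω i j ↦ X i j ω := by
    ext; simp [Sigma.curry]
  rw [iIndepFun_iff_map_fun_eq_infinitePi_map (by fun_prop)] at h ⊢
  rw [← hc, ← Measure.map_map (by fun_prop) (by fun_prop), h,
    Measure.infinitePi_map_piCurry (fun i j ↦ ν.map (X i j))]
  congr 1
  ext i : 1
  exact ((iIndepFun_iff_map_fun_eq_infinitePi_map (mX i)).1 (hrow i)).symm
end

/-! ### The sample variance as an average over permutations -/

lemma exists_perm_pair {α : Type*} [DecidableEq α] {a b a' b' : α} (h : a ≠ b) (h' : a' ≠ b') :
    ∃ τ : Equiv.Perm α, τ a = a' ∧ τ b = b' := by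
  refine ⟨(Equiv.swap a a').trans (Equiv.swap (Equiv.swap a a' b) b'), ?_, ?_⟩
  · have : Equiv.swap a a' b ≠ a' := fun e => h (by
      have := congrArg (Equiv.swap a a') e
      simpa using this.symm)
    simp [Equiv.swap_apply_of_ne_of_ne this.symm h']
  · simp

/-- For `a ≠ b` and `σ` a uniform permutation, `(σ a, σ b)` is uniform over the off-diagonal pairs.
By double transitivity the sum over `σ` does not depend on `(a, b)`, so it is found by summing
over all pairs. -/
lemma sum_perm_pair {n : ℕ} (g : Fin n → Fin n → ℝ) (hg : ∀ i, g i i = 0) {a b : Fin n}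
    (hab : a ≠ b) :
    (n : ℝ) * ((n : ℝ) - 1) * ∑ σ : Equiv.Perm (Fin n), g (σ a) (σ b)
      = (Fintype.card (Equiv.Perm (Fin n)) : ℝ) * ∑ i, ∑ j, g i j := by
  set S := ∑ σ : Equiv.Perm (Fin n), g (σ a) (σ b) with hS
  have h1 : ∀ i j, ∑ σ : Equiv.Perm (Fin n), g (σ i) (σ j) = if i = j then 0 else S := by
    intro i j
    split_ifs with hij
    · simp [hij, hg]
    · obtain ⟨τ, h1, h2⟩ := exists_perm_pair hab hij
      rw [hS, ← Equiv.sum_comp (Equiv.mulRight τ) (fun σ => g (σ a) (σ b))]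
      simp [h1, h2]
  have h2 : ∑ i, ∑ j, ∑ σ : Equiv.Perm (Fin n), g (σ i) (σ j) = (n : ℝ) * ((n : ℝ) - 1) * S := by
    simp_rw [h1]
    have : ∀ i : Fin n, ∑ j : Fin n, (if i = j then 0 else S) = ((n : ℝ) - 1) * S := by
      intro i
      have : ∀ j : Fin n, (if i = j then 0 else S) = S - if i = j then S else 0 := by
        intro j; split_ifs <;> simp
      simp_rw [this, Finset.sum_sub_distrib]
      simp; ring
    simp_rw [this]
    simp; ring
  rw [← h2]
  have h3 : ∀ σ : Equiv.Perm (Fin n), ∑ i, ∑ j, g (σ i) (σ j) = ∑ i, ∑ j, g i j := by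
    intro σ
    rw [Equiv.sum_comp σ (fun i => ∑ j, g i (σ j))]
    exact Finset.sum_congr rfl fun i _ => Equiv.sum_comp σ (fun j => g i j)
  calc _ = ∑ i, ∑ σ : Equiv.Perm (Fin n), ∑ j, g (σ i) (σ j) :=
        Finset.sum_congr rfl fun i _ => Finset.sum_comm
    _ = ∑ σ : Equiv.Perm (Fin n), ∑ i, ∑ j, g (σ i) (σ j) := Finset.sum_comm
    _ = _ := by simp_rw [h3]; simp

/-- Hoeffding's representation of the sample variance as an average over permutations. -/
lemma sampleVar_eq_perm_average {n m : ℕ} (hn : 2 ≤ n) (hm : 0 < m) (x : Fin n → ℝ)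
    (a b : Fin m → Fin n) (hab : ∀ k, a k ≠ b k) :
    sampleVar n x = ∑ σ : Equiv.Perm (Fin n), (Fintype.card (Equiv.Perm (Fin n)) : ℝ)⁻¹ *
      ((m : ℝ)⁻¹ * ∑ k, (x (σ (a k)) - x (σ (b k))) ^ 2 / 2) := by
  have hn' : (2 : ℝ) ≤ n := by exact_mod_cast hn
  have hm' : (m : ℝ) ≠ 0 := by positivity
  have hN : (Fintype.card (Equiv.Perm (Fin n)) : ℝ) ≠ 0 := by
    exact_mod_cast Fintype.card_ne_zero
  have key : ∀ k, ∑ σ : Equiv.Perm (Fin n), (x (σ (a k)) - x (σ (b k))) ^ 2 / 2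
      = (Fintype.card (Equiv.Perm (Fin n)) : ℝ) * sampleVar n x := by
    intro k
    have h := sum_perm_pair (fun i j => (x i - x j) ^ 2) (by simp) (hab k)
    rw [← Finset.sum_div, sampleVar]
    have h1 : (n : ℝ) ≠ 0 := by linarith
    have h2 : (n : ℝ) - 1 ≠ 0 := by linarith
    field_simp
    linarith
  rw [← Finset.mul_sum, ← Finset.mul_sum, Finset.sum_comm]
  simp_rw [key]
  simp
  field_simp

/-! ### Tail bounds -/

section
variable {Ω : Type*} [MeasurableSpace Ω] {ν : Measure Ω} [IsProbabilityMeasure ν]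

lemma integral_half_sq_sub {n : ℕ} {Z : Fin n → Ω → ℝ} (hm : ∀ i, Measurable (Z i))
    (hr : ∀ i ω, Z i ω ∈ Set.Icc (0 : ℝ) 1) (hind : iIndepFun Z ν) {p V : ℝ}
    (hp : ∀ i, ∫ ω, Z i ω ∂ν = p) (hV : ∀ i, ∫ ω, Z i ω ^ 2 ∂ν = V + p ^ 2)
    {i j : Fin n} (hij : i ≠ j) : ∫ ω, (Z i ω - Z j ω) ^ 2 / 2 ∂ν = V := by
  have hb : ∀ i ω, |Z i ω| ≤ 1 := fun i ω => abs_le.2 ⟨by linarith [(hr i ω).1], (hr i ω).2⟩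
  have i2 : ∀ i, Integrable (fun ω => Z i ω ^ 2) ν := fun i =>
    integrable_of_abs_le ((hm i).pow_const 2) (C := 1) fun ω => by
      rw [abs_pow]; exact pow_le_one₀ (abs_nonneg _) (hb i ω)
  have i3 : Integrable (fun ω => Z i ω * Z j ω) ν :=
    integrable_of_abs_le ((hm i).mul (hm j)) (C := 1) fun ω => by
      rw [abs_mul]; exact mul_le_one₀ (hb i ω) (abs_nonneg _) (hb j ω)
  have hprod : ∫ ω, Z i ω * Z j ω ∂ν = p * p := by
    rw [(hind.indepFun hij).integral_fun_mul_eq_mul_integral (hm i).aestronglyMeasurable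
      (hm j).aestronglyMeasurable, hp, hp]
  have : ∀ ω, (Z i ω - Z j ω) ^ 2 / 2
      = ((1 / 2) * Z i ω ^ 2 + (1 / 2) * Z j ω ^ 2) - Z i ω * Z j ω := fun ω => by ring
  simp_rw [this]
  have i4 : Integrable (fun ω => (1 / 2) * Z i ω ^ 2 + (1 / 2) * Z j ω ^ 2) ν :=
    ((i2 i).const_mul _).add ((i2 j).const_mul _)
  rw [integral_sub i4 i3,
    integral_add ((i2 i).const_mul _) ((i2 j).const_mul _), integral_const_mul,
    integral_const_mul, hV, hV, hprod]
  ring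

/-- The pairs selected by the injection `e` are disjoint, so the `m` summands are independent. -/
lemma mgf_pair_sum_le {n m : ℕ} {Z : Fin n → Ω → ℝ} (hm : ∀ i, Measurable (Z i))
    (hr : ∀ i ω, Z i ω ∈ Set.Icc (0 : ℝ) 1) (hind : iIndepFun Z ν) {p V : ℝ}
    (hp : ∀ i, ∫ ω, Z i ω ∂ν = p) (hV : ∀ i, ∫ ω, Z i ω ^ 2 ∂ν = V + p ^ 2)
    (e : (_ : Fin m) × Fin 2 → Fin n) (he : e.Injective) {t : ℝ} (ht : 0 ≤ t) :
    mgf (∑ k : Fin m, fun ω => V - (Z (e ⟨k, 0⟩) ω - Z (e ⟨k, 1⟩) ω) ^ 2 / 2) ν t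
      ≤ Real.exp (m * (V * (t ^ 2 / 4))) := by
  have hpair : iIndepFun (fun (k : Fin m) ω (j : Fin 2) => Z (e ⟨k, j⟩) ω) ν :=
    iIndepFun_curry (X := fun k j => Z (e ⟨k, j⟩)) (fun _ _ => hm _) (hind.precomp he)
  have hY : iIndepFun (fun (k : Fin m) ω => V - (Z (e ⟨k, 0⟩) ω - Z (e ⟨k, 1⟩) ω) ^ 2 / 2) ν :=
    hpair.comp (fun _ (z : Fin 2 → ℝ) => V - (z 0 - z 1) ^ 2 / 2) (fun _ => by fun_prop)
  have hQm : ∀ k : Fin m, Measurable fun ω => (Z (e ⟨k, 0⟩) ω - Z (e ⟨k, 1⟩) ω) ^ 2 / 2 :=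
    fun k => (((hm _).sub (hm _)).pow_const 2).div_const 2
  rw [hY.mgf_sum (fun k => (hQm k).const_sub V)]
  calc _ ≤ ∏ k : Fin m, Real.exp (V * (t ^ 2 / 4)) := by
        refine Finset.prod_le_prod (fun _ _ => mgf_nonneg) fun k _ => ?_
        refine mgf_const_sub_le (hQm k) (fun ω => by positivity) (fun ω => ?_)
          (integral_half_sq_sub hm hr hind hp hV fun h => ?_) ht
        · have h0 := hr (e ⟨k, 0⟩) ω
          have h1 := hr (e ⟨k, 1⟩) ω
          have : (Z (e ⟨k, 0⟩) ω - Z (e ⟨k, 1⟩) ω) ^ 2 ≤ 1 :=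
            (sq_le_one_iff_abs_le_one _).2
              (abs_le.2 ⟨by linarith [h0.1, h1.2], by linarith [h0.2, h1.1]⟩)
          linarith
        · simpa using he h
    _ = _ := by rw [← Real.exp_sum]; simp

/-- Sub-Gaussian bound on the moment generating function of `V - Vₙ`, by Hoeffding's representation
and Jensen's inequality. -/
lemma mgf_sampleVar_le {n : ℕ} (hn : 2 ≤ n) {Z : Fin n → Ω → ℝ} (hm : ∀ i, Measurable (Z i))
    (hr : ∀ i ω, Z i ω ∈ Set.Icc (0 : ℝ) 1) (hind : iIndepFun Z ν) {p V : ℝ} (hV0 : 0 ≤ V)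
    (hp : ∀ i, ∫ ω, Z i ω ∂ν = p) (hV : ∀ i, ∫ ω, Z i ω ^ 2 ∂ν = V + p ^ 2)
    {t : ℝ} (ht : 0 ≤ t) :
    Integrable (fun ω => Real.exp (t * (V - sampleVar n (fun i => Z i ω)))) ν ∧
    mgf (fun ω => V - sampleVar n (fun i => Z i ω)) ν t
      ≤ Real.exp (V * (t ^ 2 / (2 * ((n : ℝ) - 1)))) := by
  have hn' : (2 : ℝ) ≤ n := by exact_mod_cast hn
  obtain ⟨m, hm0, hmn, hnm⟩ : ∃ m : ℕ, 0 < m ∧ 2 * m ≤ n ∧ n ≤ 2 * m + 1 :=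
    ⟨n / 2, by omega, by omega, by omega⟩
  have hm1 : (0 : ℝ) < m := by exact_mod_cast hm0
  have hnm' : (n : ℝ) ≤ 2 * m + 1 := by exact_mod_cast hnm
  -- `e (k, j) = 2k + j` lists the pairs `{0, 1}, {2, 3}, …`.
  let e : (_ : Fin m) × Fin 2 → Fin n := fun q => ⟨2 * q.1 + q.2, by
    have := q.1.2; have := q.2.2; omega⟩
  have he : e.Injective := by
    rintro ⟨k, j⟩ ⟨k', j'⟩ h
    simp only [e, Fin.mk.injEq] at h
    have h1 : k = k' := by ext; omega
    have h2 : j = j' := by ext; omega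
    subst h1 h2; rfl
  have hne : ∀ k, e ⟨k, 0⟩ ≠ e ⟨k, 1⟩ := fun k h => by simpa using he h
  set N : ℝ := (Fintype.card (Equiv.Perm (Fin n)) : ℝ) with hN
  have hN0 : 0 < N := by rw [hN]; exact_mod_cast Fintype.card_pos
  let D : Equiv.Perm (Fin n) → Ω → ℝ := fun σ =>
    ∑ k : Fin m, fun ω => V - (Z (σ (e ⟨k, 0⟩)) ω - Z (σ (e ⟨k, 1⟩)) ω) ^ 2 / 2
  have hDm : ∀ σ, Measurable (D σ) := fun σ => by
    simp only [D, Finset.sum_fn]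
    exact Finset.measurable_sum _ fun k _ =>
      ((((hm _).sub (hm _)).pow_const 2).div_const 2).const_sub V
  have hDb : ∀ σ ω, |D σ ω| ≤ m * (V + 1) := by
    intro σ ω
    simp only [D, Finset.sum_apply]
    refine (Finset.abs_sum_le_sum_abs _ _).trans ?_
    calc _ ≤ ∑ k : Fin m, (V + 1) := by
          refine Finset.sum_le_sum fun k _ => ?_
          have h0 := hr (σ (e ⟨k, 0⟩)) ω
          have h1 := hr (σ (e ⟨k, 1⟩)) ω
          have h2 : (Z (σ (e ⟨k, 0⟩)) ω - Z (σ (e ⟨k, 1⟩)) ω) ^ 2 ≤ 1 :=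
            (sq_le_one_iff_abs_le_one _).2
              (abs_le.2 ⟨by linarith [h0.1, h1.2], by linarith [h0.2, h1.1]⟩)
          have h3 := sq_nonneg (Z (σ (e ⟨k, 0⟩)) ω - Z (σ (e ⟨k, 1⟩)) ω)
          exact abs_le.2 ⟨by linarith, by linarith⟩
      _ = _ := by simp [mul_add]
  have hDi : ∀ σ, Integrable (fun ω => Real.exp (t / m * D σ ω)) ν := fun σ =>
    integrable_exp_mul_of_abs_le (hDm σ) (hDb σ) _
  have hw : ∑ _σ : Equiv.Perm (Fin n), N⁻¹ = 1 := by
    simp [← hN, hN0.ne']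
  have hid : ∀ ω, V - sampleVar n (fun i => Z i ω) = ∑ σ, N⁻¹ * ((m : ℝ)⁻¹ * D σ ω) := by
    intro ω
    rw [sampleVar_eq_perm_average hn hm0 _ (fun k => e ⟨k, 0⟩) (fun k => e ⟨k, 1⟩) hne]
    have : ∀ σ, (m : ℝ)⁻¹ * D σ ω = V - (m : ℝ)⁻¹ *
        ∑ k, (Z (σ (e ⟨k, 0⟩)) ω - Z (σ (e ⟨k, 1⟩)) ω) ^ 2 / 2 := by
      intro σ
      simp only [D, Finset.sum_apply, Finset.sum_sub_distrib, mul_sub]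
      simp [hm1.ne']
    simp_rw [this, mul_sub, Finset.sum_sub_distrib, ← Finset.sum_mul, hw, one_mul]
    rfl
  have hjensen : ∀ ω, Real.exp (t * (V - sampleVar n (fun i => Z i ω)))
      ≤ ∑ σ, N⁻¹ * Real.exp (t / m * D σ ω) := by
    intro ω
    have := convexOn_exp.map_sum_le (t := Finset.univ) (w := fun _ : Equiv.Perm (Fin n) => N⁻¹)
      (p := fun σ => t / m * D σ ω) (fun _ _ => by positivity) hw (fun _ _ => Set.mem_univ _)
    simp only [smul_eq_mul] at this
    refine le_trans (le_of_eq ?_) this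
    rw [hid, Finset.mul_sum]
    congr 1
    exact Finset.sum_congr rfl fun σ _ => by ring
  have hsum : Integrable (fun ω => ∑ σ, N⁻¹ * Real.exp (t / m * D σ ω)) ν :=
    integrable_finsetSum _ fun σ _ => (hDi σ).const_mul _
  have hint : Integrable (fun ω => Real.exp (t * (V - sampleVar n (fun i => Z i ω)))) ν := by
    refine hsum.mono' ?_ (Filter.Eventually.of_forall fun ω => ?_)
    · have : Measurable fun ω => ∑ σ, N⁻¹ * ((m : ℝ)⁻¹ * D σ ω) :=
        Finset.measurable_sum _ fun σ _ => ((hDm σ).const_mul _).const_mul _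
      simp_rw [hid]
      exact (Real.measurable_exp.comp (this.const_mul t)).aestronglyMeasurable
    · rw [Real.norm_eq_abs, Real.abs_exp]; exact hjensen ω
  refine ⟨hint, ?_⟩
  calc _ ≤ ∫ ω, ∑ σ, N⁻¹ * Real.exp (t / m * D σ ω) ∂ν := integral_mono hint hsum hjensen
    _ = ∑ σ, N⁻¹ * mgf (D σ) ν (t / m) := by
        rw [integral_finsetSum _ fun σ _ => (hDi σ).const_mul _]
        simp_rw [integral_const_mul]
        rfl
    _ ≤ ∑ σ : Equiv.Perm (Fin n), N⁻¹ * Real.exp (m * (V * ((t / m) ^ 2 / 4))) := by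
        refine Finset.sum_le_sum fun σ _ => ?_
        gcongr
        exact mgf_pair_sum_le hm hr hind hp hV (σ ∘ e) (σ.injective.comp he)
          (div_nonneg ht hm1.le)
    _ = Real.exp (V * (t ^ 2 / (4 * m))) := by
        rw [← Finset.sum_mul, hw, one_mul]
        congr 1
        field_simp
    _ ≤ _ := by
        apply Real.exp_le_exp.2
        refine mul_le_mul_of_nonneg_left ?_ hV0
        apply div_le_div_of_nonneg_left (sq_nonneg t) (by linarith)
        linarith

/-- Lower tail of the sample standard deviation: `√V ≤ √Vₙ + √(2L/(n-1))` fails with probability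
at most `exp (-L)`. -/
lemma variance_tail {n : ℕ} (hn : 2 ≤ n) {Z : Fin n → Ω → ℝ} (hm : ∀ i, Measurable (Z i))
    (hr : ∀ i ω, Z i ω ∈ Set.Icc (0 : ℝ) 1) (hind : iIndepFun Z ν) {p V : ℝ} (hV0 : 0 ≤ V)
    (hp : ∀ i, ∫ ω, Z i ω ∂ν = p) (hV : ∀ i, ∫ ω, Z i ω ^ 2 ∂ν = V + p ^ 2)
    {L : ℝ} (hL : 0 < L) :
    ν.real {ω | √(sampleVar n (fun i => Z i ω)) + √(2 * L / ((n : ℝ) - 1)) < √V}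
      ≤ Real.exp (-L) := by
  have hn' : (2 : ℝ) ≤ n := by exact_mod_cast hn
  have hn1 : 0 < (n : ℝ) - 1 := by linarith
  rcases hV0.eq_or_lt with rfl | hVpos
  · have : {ω | √(sampleVar n (fun i => Z i ω)) + √(2 * L / ((n : ℝ) - 1)) < √(0 : ℝ)} = ∅ := by
      ext ω
      simp only [Real.sqrt_zero, Set.mem_ofPred_eq, Set.mem_empty_iff_false, iff_false, not_lt]
      positivity
    rw [this]
    simp [Real.exp_nonneg]
  set b := √(2 * L / ((n : ℝ) - 1)) with hb
  have hbpos : 0 < b := Real.sqrt_pos.2 (by positivity)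
  have hb2 : b ^ 2 = 2 * L / ((n : ℝ) - 1) := Real.sq_sqrt (by positivity)
  have hLb : L = ((n : ℝ) - 1) * b ^ 2 / 2 := by rw [hb2]; field_simp
  set v := √V with hv
  have hvpos : 0 < v := Real.sqrt_pos.2 hVpos
  have hv2 : v ^ 2 = V := Real.sq_sqrt hV0
  -- The exponent minimizing `-t * (v * b) + V * t² / (2(n-1))`.
  set t := ((n : ℝ) - 1) * b / v with ht
  have ht0 : 0 ≤ t := by positivity
  obtain ⟨hint, hmgf⟩ := mgf_sampleVar_le hn hm hr hind hV0 hp hV ht0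
  calc _ ≤ ν.real {ω | v * b ≤ V - sampleVar n (fun i => Z i ω)} := by
        refine measureReal_mono fun ω hω => ?_
        simp only [Set.mem_ofPred_eq] at hω ⊢
        set w := √(sampleVar n (fun i => Z i ω)) with hw
        have hw0 : 0 ≤ w := Real.sqrt_nonneg _
        have hw2 : sampleVar n (fun i => Z i ω) ≤ w ^ 2 := by
          rcases le_total 0 (sampleVar n (fun i => Z i ω)) with h | h
          · exact (Real.sq_sqrt h).ge
          · exact h.trans (sq_nonneg _)
        nlinarith
    _ ≤ Real.exp (-t * (v * b)) * _ := measure_ge_le_exp_mul_mgf _ ht0 hint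
    _ ≤ Real.exp (-t * (v * b)) * Real.exp (V * (t ^ 2 / (2 * ((n : ℝ) - 1)))) := by gcongr
    _ = Real.exp (-L) := by
        rw [← Real.exp_add, hLb, ← hv2, ht]
        congr 1
        field_simp
        ring

/-- Bernstein's inequality in sub-gamma form. The sharp linear term is `L/(3n)`; the slightly larger
`L/(3(n-1))` lets `V = 0` be treated by an exponent strictly below `3`. -/
lemma bernstein_tail {n : ℕ} (hn : 2 ≤ n) {Z : Fin n → Ω → ℝ} (hm : ∀ i, Measurable (Z i))
    (hr : ∀ i ω, Z i ω ∈ Set.Icc (0 : ℝ) 1) (hind : iIndepFun Z ν) {p V : ℝ} (hV0 : 0 ≤ V)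
    (hp : ∀ i, ∫ ω, Z i ω ∂ν = p) (hV : ∀ i, ∫ ω, Z i ω ^ 2 ∂ν = V + p ^ 2)
    {L : ℝ} (hL : 0 < L) :
    ν.real {ω | √(2 * V * L / n) + L / (3 * ((n : ℝ) - 1)) < p - sampleMean n (fun i => Z i ω)}
      ≤ Real.exp (-L) := by
  have hn' : (2 : ℝ) ≤ n := by exact_mod_cast hn
  have hn1 : 0 < (n : ℝ) - 1 := by linarith
  have hn0 : 0 < (n : ℝ) := by linarith
  have hb : ∀ i ω, |Z i ω| ≤ 1 := fun i ω => abs_le.2 ⟨by linarith [(hr i ω).1], (hr i ω).2⟩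
  have iZ : ∀ i, Integrable (Z i) ν := fun i => integrable_of_abs_le (hm i) (hb i)
  have iZ2 : ∀ i, Integrable (fun ω => Z i ω ^ 2) ν := fun i =>
    integrable_of_abs_le ((hm i).pow_const 2) (C := 1) fun ω => by
      rw [abs_pow]; exact pow_le_one₀ (abs_nonneg _) (hb i ω)
  have hp0 : 0 ≤ p := by
    rw [← hp ⟨0, by omega⟩]; exact integral_nonneg fun ω => (hr _ ω).1
  have hp1 : p ≤ 1 := by
    rw [← hp ⟨0, by omega⟩]
    calc _ ≤ ∫ _ : Ω, (1 : ℝ) ∂ν := integral_mono (iZ _) (integrable_const 1) fun ω => (hr _ ω).2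
      _ = 1 := by simp
  let Y : Fin n → Ω → ℝ := fun i ω => p - Z i ω
  have hYm : ∀ i, Measurable (Y i) := fun i => (hm i).const_sub p
  have hYb : ∀ i ω, |Y i ω| ≤ 1 := fun i ω =>
    abs_le.2 ⟨by linarith [(hr i ω).2], by linarith [(hr i ω).1]⟩
  have hY0 : ∀ i, ∫ ω, Y i ω ∂ν = 0 := by
    intro i
    simp only [Y]
    rw [integral_sub (integrable_const p) (iZ i), hp]
    simp
  have hY2 : ∀ i, ∫ ω, Y i ω ^ 2 ∂ν = V := by
    intro i
    have : ∀ ω, Y i ω ^ 2 = (p ^ 2 - 2 * p * Z i ω) + Z i ω ^ 2 := fun ω => by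
      simp only [Y]; ring
    simp_rw [this]
    have i3 : Integrable (fun ω => p ^ 2 - 2 * p * Z i ω) ν :=
      (integrable_const _).sub ((iZ i).const_mul _)
    rw [integral_add i3 (iZ2 i),
      integral_sub (integrable_const _) ((iZ i).const_mul _), integral_const_mul, hp, hV]
    simp; ring
  have hYi : iIndepFun Y ν := hind.comp (fun _ z => p - z) (fun _ => by fun_prop)
  have hSm : Measurable (∑ i, Y i) := by
    rw [Finset.sum_fn]
    exact Finset.measurable_sum _ fun i _ => hYm i
  have hSb : ∀ ω, |(∑ i, Y i) ω| ≤ n := by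
    intro ω
    rw [Finset.sum_apply]
    refine (Finset.abs_sum_le_sum_abs _ _).trans ?_
    calc _ ≤ ∑ i : Fin n, (1 : ℝ) := Finset.sum_le_sum fun i _ => hYb i ω
      _ = n := by simp
  have hSeq : ∀ ω, (∑ i, Y i) ω = n * (p - sampleMean n (fun i => Z i ω)) := by
    intro ω
    simp only [Finset.sum_apply, Y, sampleMean, Finset.sum_sub_distrib]
    simp
    field_simp
  have chernoff : ∀ ε t : ℝ, 0 ≤ t → t < 3 → ν.real {ω | ε ≤ (∑ i, Y i) ω}
      ≤ Real.exp (-t * ε + n * (V * (t ^ 2 / (2 * (1 - t / 3))))) := by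
    intro ε t ht ht3
    refine (measure_ge_le_exp_mul_mgf ε ht (integrable_exp_mul_of_abs_le hSm hSb t)).trans ?_
    rw [Real.exp_add]
    gcongr
    rw [hYi.mgf_sum hYm]
    calc _ ≤ ∏ _i : Fin n, Real.exp (V * (t ^ 2 / (2 * (1 - t / 3)))) :=
          Finset.prod_le_prod (fun _ _ => mgf_nonneg) fun i _ =>
            mgf_le_bernstein (hYm i) (hYb i) (hY0 i) (hY2 i) ht ht3
      _ = _ := by rw [← Real.exp_sum]; simp
  rcases hV0.eq_or_lt with rfl | hVpos
  · have hc := chernoff (n * (L / (3 * ((n : ℝ) - 1)))) (3 * ((n : ℝ) - 1) / n) (by positivity)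
      (by rw [div_lt_iff₀ hn0]; linarith)
    have hexp : -(3 * ((n : ℝ) - 1) / n) * (n * (L / (3 * ((n : ℝ) - 1)))) = -L := by
      field_simp
    rw [hexp] at hc
    simp only [zero_mul, mul_zero, add_zero] at hc
    refine le_trans (measureReal_mono fun ω hω => ?_) hc
    simp only [Set.mem_ofPred_eq, mul_zero, zero_mul, zero_div, Real.sqrt_zero, zero_add] at hω ⊢
    rw [hSeq]
    gcongr
  · set s := √(2 * L / (n * V)) with hs
    have hs0 : 0 < s := Real.sqrt_pos.2 (by positivity)
    have hs2 : s ^ 2 = 2 * L / (n * V) := Real.sq_sqrt (by positivity)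
    have hLs : L = s ^ 2 * (n * V) / 2 := by rw [hs2]; field_simp
    have hroot : √(2 * V * L / n) = V * s := by
      rw [Real.sqrt_eq_iff_mul_self_eq_of_pos (by positivity), hLs]
      field_simp
    have hs3 : s / (1 + s / 3) < 3 := by
      rw [div_lt_iff₀ (by positivity)]; linarith
    -- With this exponent the sub-gamma Chernoff bound equals `exp (-L)` exactly.
    have hc := chernoff (n * (V * s) + L / 3) (s / (1 + s / 3)) (by positivity) hs3
    have hden : 1 - s / (1 + s / 3) / 3 = (1 + s / 3)⁻¹ := by field_simp; ring
    have hexp : -(s / (1 + s / 3)) * (n * (V * s) + L / 3)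
        + n * (V * ((s / (1 + s / 3)) ^ 2 / (2 * (1 - s / (1 + s / 3) / 3)))) = -L := by
      rw [hden, hLs]
      field_simp
      ring
    rw [hexp] at hc
    refine le_trans (measureReal_mono fun ω hω => ?_) hc
    simp only [Set.mem_ofPred_eq] at hω ⊢
    rw [hroot] at hω
    rw [hSeq]
    have h1 : L / 3 ≤ n * (L / (3 * ((n : ℝ) - 1))) := by
      rw [← mul_div_assoc, div_le_div_iff₀ (by norm_num) (by positivity)]
      nlinarith
    nlinarith [mul_lt_mul_of_pos_left hω hn0]

/-- The empirical Bernstein bound for independent `[0, 1]`-valued variables with common mean `p` and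
variance `V`, with failure probability `2 exp (-L)`. -/
lemma empirical_bernstein_single {n : ℕ} (hn : 2 ≤ n) {Z : Fin n → Ω → ℝ}
    (hm : ∀ i, Measurable (Z i))
    (hr : ∀ i ω, Z i ω ∈ Set.Icc (0 : ℝ) 1) (hind : iIndepFun Z ν) {p V : ℝ} (hV0 : 0 ≤ V)
    (hp : ∀ i, ∫ ω, Z i ω ∂ν = p) (hV : ∀ i, ∫ ω, Z i ω ^ 2 ∂ν = V + p ^ 2)
    {L : ℝ} (hL : 0 < L) :
    ν.real {ω | ¬ (p - sampleMean n (fun i => Z i ω) ≤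
      √(2 * sampleVar n (fun i => Z i ω) * L / n) + 7 * L / (3 * ((n : ℝ) - 1)))}
      ≤ 2 * Real.exp (-L) := by
  have hn' : (2 : ℝ) ≤ n := by exact_mod_cast hn
  have hn1 : 0 < (n : ℝ) - 1 := by linarith
  have hn0 : 0 < (n : ℝ) := by linarith
  have h1 := bernstein_tail hn hm hr hind hV0 hp hV hL
  have h2 := variance_tail hn hm hr hind hV0 hp hV hL
  refine le_trans (measureReal_mono ?_) ((measureReal_union_le _ _).trans
    ((add_le_add h1 h2).trans_eq (two_mul _).symm))
  intro ω hω
  by_contra hcon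
  simp only [Set.mem_union, Set.mem_ofPred_eq, not_or, not_lt] at hcon
  obtain ⟨hA, hB⟩ := hcon
  apply hω
  set W := sampleVar n (fun i => Z i ω) with hW
  set c := √(2 * L / n) with hc
  have hc0 : 0 ≤ c := Real.sqrt_nonneg _
  have e1 : √(2 * V * L / n) = √V * c := by
    rw [hc, ← Real.sqrt_mul hV0]; congr 1; ring
  have hW0 : 0 ≤ W := by
    rw [hW, sampleVar]
    exact div_nonneg (Finset.sum_nonneg fun i _ => Finset.sum_nonneg fun j _ => sq_nonneg _)
      (by positivity)
  have e2 : √(2 * W * L / n) = √W * c := by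
    rw [hc, ← Real.sqrt_mul hW0]; congr 1; ring
  set b := √(2 * L / ((n : ℝ) - 1)) with hb
  have hb0 : 0 ≤ b := Real.sqrt_nonneg _
  have hcb : c ≤ b := by
    apply Real.sqrt_le_sqrt
    apply div_le_div_of_nonneg_left (by positivity) hn1; linarith
  have hb2 : b ^ 2 = 2 * L / ((n : ℝ) - 1) := Real.sq_sqrt (by positivity)
  have h7 : 7 * L / (3 * ((n : ℝ) - 1)) = b ^ 2 + L / (3 * ((n : ℝ) - 1)) := by
    rw [hb2]; field_simp; ring
  rw [e1] at hA
  rw [e2, h7]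
  nlinarith [mul_le_mul_of_nonneg_right hB hc0, mul_le_mul_of_nonneg_left hcb hb0]
end

/-- **Empirical Bernstein bound, uniform over a finite hypothesis class** (Corollary 5):
with probability at least `1 - δ` in `𝐗 ∼ μⁿ`, simultaneously for all `f ∈ ℱ`,
`P(f,μ) - Pₙ(f,𝐗) ≤ √(2 Vₙ(f,𝐗) ln(2|ℱ|/δ) / n) + 7 ln(2|ℱ|/δ) / (3(n-1))`. -/
theorem empirical_bernstein_finite_class (𝒳 : Type*) [MeasurableSpace 𝒳]
    (μ : Measure 𝒳) [IsProbabilityMeasure μ]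
    (F : Finset (𝒳 → ℝ)) (hmeas : ∀ f ∈ F, Measurable f)
    (hrange : ∀ f ∈ F, ∀ x, f x ∈ Set.Icc (0 : ℝ) 1)
    (n : ℕ) (hn : 2 ≤ n) (δ : ℝ) (hδ : 0 < δ) :
    1 - δ ≤ ((Measure.pi fun _ : Fin n => μ)
      {X | ∀ f ∈ F,
        (∫ x, f x ∂μ) - sampleMean n (fun i => f (X i)) ≤
          Real.sqrt (2 * sampleVar n (fun i => f (X i)) *
              Real.log (2 * (F.card : ℝ) / δ) / n) +
            7 * Real.log (2 * (F.card : ℝ) / δ) / (3 * ((n : ℝ) - 1))}).toReal := by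
  set L := Real.log (2 * (F.card : ℝ) / δ) with hLdef
  set ν := Measure.pi fun _ : Fin n => μ with hν
  change 1 - δ ≤ ν.real _
  rcases le_or_gt 1 δ with hδ1 | hδ1
  · exact (sub_nonpos.2 hδ1).trans measureReal_nonneg
  rcases F.eq_empty_or_nonempty with rfl | hF
  · simp [hδ.le]
  have hcard : (1 : ℝ) ≤ F.card := by exact_mod_cast hF.card_pos
  have hL : 0 < L := by
    apply Real.log_pos
    rw [lt_div_iff₀ hδ]; linarith
  have hexp : Real.exp (-L) = δ / (2 * F.card) := by
    rw [Real.exp_neg, hLdef, Real.exp_log (by positivity), inv_div]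
  let G : (𝒳 → ℝ) → Set (Fin n → 𝒳) := fun f =>
    {X | ¬ ((∫ x, f x ∂μ) - sampleMean n (fun i => f (X i)) ≤
      √(2 * sampleVar n (fun i => f (X i)) * L / n) + 7 * L / (3 * ((n : ℝ) - 1)))}
  have hG : ∀ f ∈ F, ν.real (G f) ≤ δ / F.card := by
    intro f hf
    have hfm := hmeas f hf
    have hfr := hrange f hf
    have hmp : ∀ i : Fin n, MeasurePreserving (fun X : Fin n → 𝒳 => X i) ν μ :=
      fun i => measurePreserving_eval _ i
    have hp : ∀ i : Fin n, ∫ X, f (X i) ∂ν = ∫ x, f x ∂μ := fun i => by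
      rw [← (hmp i).map_eq, integral_map (hmp i).measurable.aemeasurable
        hfm.aestronglyMeasurable]
    have hp2 : ∀ i : Fin n, ∫ X, f (X i) ^ 2 ∂ν = ∫ x, f x ^ 2 ∂μ := fun i => by
      rw [← (hmp i).map_eq, integral_map (hmp i).measurable.aemeasurable
        (hfm.pow_const 2).aestronglyMeasurable]
    have hLp : MemLp f 2 μ := MemLp.of_bound hfm.aestronglyMeasurable 1
      (Filter.Eventually.of_forall fun x => by
        rw [Real.norm_eq_abs]; exact abs_le.2 ⟨by linarith [(hfr x).1], (hfr x).2⟩)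
    have hvar := variance_eq_sub hLp
    have h := empirical_bernstein_single (ν := ν) hn (Z := fun i X => f (X i))
      (fun i => hfm.comp (measurable_pi_apply i)) (fun i X => hfr _)
      (iIndepFun_pi fun _ => hfm.aemeasurable) (variance_nonneg f μ) hp
      (fun i => by rw [hp2, hvar]; simp) hL
    refine h.trans_eq ?_
    rw [hexp]; field_simp
  set A : Set (Fin n → 𝒳) := {X | ∀ f ∈ F,
        (∫ x, f x ∂μ) - sampleMean n (fun i => f (X i)) ≤
          √(2 * sampleVar n (fun i => f (X i)) * L / n) + 7 * L / (3 * ((n : ℝ) - 1))} with hA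
  have hbad : ν.real Aᶜ ≤ δ := by
    have hsub : Aᶜ ⊆ ⋃ f ∈ F, G f := by
      intro X hX
      simp only [hA, Set.mem_compl_iff, Set.mem_ofPred_eq, not_forall] at hX
      obtain ⟨f, hf, hX⟩ := hX
      exact Set.mem_biUnion hf hX
    calc ν.real Aᶜ ≤ ν.real (⋃ f ∈ F, G f) :=
          measureReal_mono hsub (measure_ne_top _ _)
      _ ≤ ∑ f ∈ F, ν.real (G f) := measureReal_biUnion_finset_le _ _
      _ ≤ ∑ f ∈ F, δ / F.card := Finset.sum_le_sum hG
      _ = δ := by simp; field_simp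
  have hone : 1 ≤ ν.real A + ν.real Aᶜ := by
    calc (1 : ℝ) = ν.real (A ∪ Aᶜ) := by simp
      _ ≤ _ := measureReal_union_le _ _
  linarith
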